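/- For every even positive integer r, there exists a strong Gallai-Schur r-coloring of [1, 5^(r/2) − 1], and for every m ≥ 5^(r/2) there is no strong Gallai-Schur r-coloring of [1, m]. Equivalently, the strong Gallai-Schur number GS(r) equals 5^(r/2) for even r. -/

import Mathlib

/-- A strong Gallai–Schur coloring of the interval `[1, m]` with color set `C`:
`χ` maps `[1, m]` into `C`, is surjective onto `C`, admits no monochromatic
solution of `a + b = c` (with `a = b` allowed), and admits no rainbow solution
of `a + b = c`. -/
def StrongGS (m : ℕ) (C : Finset ℕ) (χ : ℕ → ℕ) : Prop :=
  (∀ x ∈ Finset.Icc 1 m, χ x ∈ C) ∧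
  (∀ i ∈ C, ∃ x ∈ Finset.Icc 1 m, χ x = i) ∧
  (∀ a ∈ Finset.Icc 1 m, ∀ b ∈ Finset.Icc 1 m, ∀ c ∈ Finset.Icc 1 m,
      a + b = c → ¬(χ a = χ b ∧ χ b = χ c)) ∧
  (∀ a ∈ Finset.Icc 1 m, ∀ b ∈ Finset.Icc 1 m, ∀ c ∈ Finset.Icc 1 m,
      a + b = c → ¬(χ a ≠ χ b ∧ χ a ≠ χ c ∧ χ b ≠ χ c))

/-- The strong Gallai–Schur number `GS r`: the least `n` such that no strong
Gallai–Schur `r`-coloring of `[1, m]` exists for any `m ≥ n`. -/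
noncomputable def GS (r : ℕ) : ℕ :=
  sInf {n : ℕ | ∀ m, n ≤ m → ∀ χ : ℕ → ℕ, ¬ StrongGS m (Finset.Icc 1 r) χ}

/-- Colorings of `[1, m]` by colors from `C` (not necessarily surjective) without
monochromatic and rainbow solutions of `a + b = c`. -/
def WeakGS (m : ℕ) (C : Finset ℕ) (χ : ℕ → ℕ) : Prop :=
  (∀ x, 1 ≤ x → x ≤ m → χ x ∈ C) ∧
  (∀ a b, 1 ≤ a → 1 ≤ b → a + b ≤ m → ¬(χ a = χ b ∧ χ b = χ (a + b))) ∧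
  (∀ a b, 1 ≤ a → 1 ≤ b → a + b ≤ m → χ a = χ b ∨ χ a = χ (a + b) ∨ χ b = χ (a + b))

/-- The extremal function: `5^(s/2)` for even `s`, `2 * 5^((s-1)/2)` for odd `s`. -/
def FF : ℕ → ℕ
  | 0 => 1
  | 1 => 2
  | (s + 2) => 5 * FF s

theorem FF_pos : ∀ s, 1 ≤ FF s
  | 0 => by simp [FF]
  | 1 => by simp [FF]
  | (s + 2) => by have := FF_pos s; simp only [FF]; omega

theorem FF_double : ∀ s, 2 * FF s ≤ FF (s + 1)
  | 0 => by simp [FF]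
  | 1 => by simp [FF]
  | (s + 2) => by have := FF_double s; simp only [FF] at *; omega

theorem FF_even : ∀ k, FF (2 * k) = 5 ^ k
  | 0 => by simp [FF]
  | (k + 1) => by
    have := FF_even k
    rw [show 2 * (k + 1) = 2 * k + 2 by ring, FF, this]; ring

/-- If `χ 1 = χ 3`, then parity determines the color class of `1`. -/
theorem two_step {m : ℕ} {C : Finset ℕ} {χ : ℕ → ℕ} (h : WeakGS m C χ)
    (hm : 3 ≤ m) (h3 : χ 3 = χ 1) :
    ∀ q, (2 * q + 1 ≤ m → χ (2 * q + 1) = χ 1) ∧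
      (1 ≤ q → 2 * q ≤ m → χ (2 * q) ≠ χ 1) := by
  obtain ⟨-, hM, hR⟩ := h
  intro q
  induction q using Nat.strong_induction_on with
  | _ q ih =>
    have hev : 1 ≤ q → 2 * q ≤ m → χ (2 * q) ≠ χ 1 := by
      intro hq hqm heq
      have h1 := (ih (q - 1) (by omega)).1 (by omega)
      have h2 := hM 1 (2 * (q - 1) + 1) (by omega) (by omega) (by omega)
      rw [show 1 + (2 * (q - 1) + 1) = 2 * q by omega] at h2
      exact h2 ⟨h1.symm, by rw [h1, heq]⟩
    refine ⟨fun hqm => ?_, hev⟩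
    rcases Nat.lt_or_ge q 2 with hq | hq
    · interval_cases q
      · rfl
      · exact h3
    · by_contra hne
      have e0 := hev (by omega) (by omega)
      have e1 := (ih (q - 1) (by omega)).2 (by omega) (by omega)
      have o1 := (ih (q - 1) (by omega)).1 (by omega)
      have e2 := (ih 1 (by omega)).2 (by omega) (by omega)
      have r1 := hR 1 (2 * q) (by omega) (by omega) (by omega)
      have r2 := hR 3 (2 * (q - 1)) (by omega) (by omega) (by omega)
      have r3 := hR 2 (2 * (q - 1) + 1) (by omega) (by omega) (by omega)
      have m1 := hM 2 (2 * (q - 1)) (by omega) (by omega) (by omega)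
      rw [show 1 + 2 * q = 2 * q + 1 by omega] at r1
      rw [show 3 + 2 * (q - 1) = 2 * q + 1 by omega] at r2
      rw [show 2 + (2 * (q - 1) + 1) = 2 * q + 1 by omega] at r3
      rw [show 2 + 2 * (q - 1) = 2 * q by omega] at m1
      simp only [mul_one] at e2
      grind

/-- If `χ 2 = χ 3`, then the residue mod `5` determines the first two colors. -/
theorem five_step {m : ℕ} {C : Finset ℕ} {χ : ℕ → ℕ} (h : WeakGS m C χ)
    (hm : 5 ≤ m) (h2 : χ 2 ≠ χ 1) (h3 : χ 3 = χ 2) :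
    ∀ q, (1 ≤ q → 5 * q ≤ m → χ (5 * q) ≠ χ 1 ∧ χ (5 * q) ≠ χ 2) ∧
      (5 * q + 1 ≤ m → χ (5 * q + 1) = χ 1) ∧
      (5 * q + 2 ≤ m → χ (5 * q + 2) = χ 2) ∧
      (5 * q + 3 ≤ m → χ (5 * q + 3) = χ 2) ∧
      (5 * q + 4 ≤ m → χ (5 * q + 4) = χ 1) := by
  obtain ⟨-, hM, hR⟩ := h
  have h4 : χ 4 = χ 1 := by
    have r1 := hR 1 3 (by omega) (by omega) (by omega)
    have m1 := hM 2 2 (by omega) (by omega) (by omega)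
    norm_num at r1 m1
    grind
  intro q
  induction q with
  | zero => simp [h3, h4]
  | succ q ih =>
    obtain ⟨-, i1, i2, i3, i4⟩ := ih
    have s0 : 5 * (q + 1) ≤ m → χ (5 * (q + 1)) ≠ χ 1 ∧ χ (5 * (q + 1)) ≠ χ 2 := by
      intro hq
      have m1 := hM 1 (5 * q + 4) (by omega) (by omega) (by omega)
      have m2 := hM 2 (5 * q + 3) (by omega) (by omega) (by omega)
      rw [show 1 + (5 * q + 4) = 5 * (q + 1) by omega] at m1
      rw [show 2 + (5 * q + 3) = 5 * (q + 1) by omega] at m2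
      have := i3 (by omega)
      have := i4 (by omega)
      grind
    have s1 : 5 * (q + 1) + 1 ≤ m → χ (5 * (q + 1) + 1) = χ 1 := by
      intro hq
      have r1 := hR 1 (5 * (q + 1)) (by omega) (by omega) (by omega)
      have r2 := hR 2 (5 * q + 4) (by omega) (by omega) (by omega)
      rw [show 1 + 5 * (q + 1) = 5 * (q + 1) + 1 by omega] at r1
      rw [show 2 + (5 * q + 4) = 5 * (q + 1) + 1 by omega] at r2
      have := s0 (by omega)
      have := i4 (by omega)
      grind
    have s2 : 5 * (q + 1) + 2 ≤ m → χ (5 * (q + 1) + 2) = χ 2 := by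
      intro hq
      have r1 := hR 2 (5 * (q + 1)) (by omega) (by omega) (by omega)
      have r2 := hR 3 (5 * q + 4) (by omega) (by omega) (by omega)
      have m1 := hM 1 (5 * (q + 1) + 1) (by omega) (by omega) (by omega)
      rw [show 2 + 5 * (q + 1) = 5 * (q + 1) + 2 by omega] at r1
      rw [show 3 + (5 * q + 4) = 5 * (q + 1) + 2 by omega] at r2
      rw [show 1 + (5 * (q + 1) + 1) = 5 * (q + 1) + 2 by omega] at m1
      have := s0 (by omega)
      have := i4 (by omega)
      have := s1 (by omega)
      grind
    have s3 : 5 * (q + 1) + 3 ≤ m → χ (5 * (q + 1) + 3) = χ 2 := by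
      intro hq
      have r2 := hR 2 (5 * (q + 1) + 1) (by omega) (by omega) (by omega)
      have m1 := hM 4 (5 * q + 4) (by omega) (by omega) (by omega)
      rw [show 2 + (5 * (q + 1) + 1) = 5 * (q + 1) + 3 by omega] at r2
      rw [show 4 + (5 * q + 4) = 5 * (q + 1) + 3 by omega] at m1
      have := i4 (by omega)
      have := s1 (by omega)
      grind
    have s4 : 5 * (q + 1) + 4 ≤ m → χ (5 * (q + 1) + 4) = χ 1 := by
      intro hq
      have r2 := hR 1 (5 * (q + 1) + 3) (by omega) (by omega) (by omega)
      have m1 := hM 2 (5 * (q + 1) + 2) (by omega) (by omega) (by omega)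
      rw [show 1 + (5 * (q + 1) + 3) = 5 * (q + 1) + 4 by omega] at r2
      rw [show 2 + (5 * (q + 1) + 2) = 5 * (q + 1) + 4 by omega] at m1
      have := s2 (by omega)
      have := s3 (by omega)
      grind
    exact ⟨fun _ => s0, s1, s2, s3, s4⟩

/-- Restriction of a coloring to the multiples of `d`. -/
theorem WeakGS.dilate {m : ℕ} {C D : Finset ℕ} {χ : ℕ → ℕ} (h : WeakGS m C χ)
    (d : ℕ) (hd : 1 ≤ d) (hD : ∀ q, 1 ≤ q → d * q ≤ m → χ (d * q) ∈ D) :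
    WeakGS (m / d) D (fun x => χ (d * x)) := by
  obtain ⟨-, hM, hR⟩ := h
  have key : ∀ x, x ≤ m / d → d * x ≤ m := fun x hx =>
    le_trans (Nat.mul_le_mul_left d hx) (Nat.mul_div_le m d)
  have pos : ∀ x, 1 ≤ x → 1 ≤ d * x := fun x hx => Nat.mul_pos hd hx
  refine ⟨fun x hx hxm => hD x hx (key x hxm), fun a b ha hb hab => ?_,
    fun a b ha hb hab => ?_⟩
  · have := hM (d * a) (d * b) (pos a ha) (pos b hb) (by rw [← mul_add]; exact key _ hab)
    simpa only [mul_add] using this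
  · have := hR (d * a) (d * b) (pos a ha) (pos b hb) (by rw [← mul_add]; exact key _ hab)
    simpa only [mul_add] using this

theorem upper_bound : ∀ (s m : ℕ) (C : Finset ℕ) (χ : ℕ → ℕ), C.card = s →
    WeakGS m C χ → m + 1 ≤ FF s := by
  intro s
  induction s using Nat.strong_induction_on with
  | _ s ih =>
    intro m C χ hC h
    rcases Nat.eq_zero_or_pos m with rfl | hm
    · exact FF_pos s
    have c1 : χ 1 ∈ C := h.1 1 le_rfl hm
    have hs1 : 1 ≤ s := hC ▸ Finset.card_pos.mpr ⟨_, c1⟩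
    obtain ⟨t, rfl⟩ : ∃ t, s = t + 1 := ⟨s - 1, by omega⟩
    have hd := FF_double t
    have hp := FF_pos t
    rcases Nat.lt_or_ge m 2 with hm2 | hm2
    · omega
    have h21 : χ 2 ≠ χ 1 := fun e =>
      h.2.1 1 1 le_rfl le_rfl hm2 ⟨rfl, e.symm⟩
    have c2 : χ 2 ∈ C := h.1 2 (by omega) hm2
    have cE : (C.erase (χ 1)).card = t := by
      rw [Finset.card_erase_of_mem c1]; omega
    have c2' : χ 2 ∈ C.erase (χ 1) := Finset.mem_erase.mpr ⟨h21, c2⟩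
    have ht1 : 1 ≤ t := cE ▸ Finset.card_pos.mpr ⟨_, c2'⟩
    obtain ⟨u, rfl⟩ : ∃ u, t = u + 1 := ⟨t - 1, by omega⟩
    have hu := FF_pos u
    have cE2 : ((C.erase (χ 1)).erase (χ 2)).card = u := by
      rw [Finset.card_erase_of_mem c2']; omega
    have hF : FF (u + 1 + 1) = 5 * FF u := rfl
    by_cases h31 : 3 ≤ m ∧ χ 3 = χ 1
    · have := ih (u + 1) (by omega) (m / 2) (C.erase (χ 1)) _ cE
        (h.dilate 2 (by omega) (fun q hq hqm => Finset.mem_erase.mpr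
          ⟨(two_step h h31.1 h31.2 q).2 hq hqm, h.1 _ (by omega) hqm⟩))
      omega
    · rcases Nat.lt_or_ge m 5 with hm5 | hm5
      · omega
      have h32 : χ 3 = χ 2 := by
        have := h.2.2 1 2 (by omega) (by omega) (by omega)
        norm_num at this
        have h31' : χ 3 ≠ χ 1 := fun e => h31 ⟨by omega, e⟩
        grind
      have := ih u (by omega) (m / 5) ((C.erase (χ 1)).erase (χ 2)) _ cE2
        (h.dilate 5 (by omega) (fun q hq hqm => by
          have := (five_step h hm5 h21 h32 q).1 hq hqm
          exact Finset.mem_erase.mpr ⟨this.2, Finset.mem_erase.mpr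
            ⟨this.1, h.1 _ (by omega) hqm⟩⟩))
      omega

/-- The extremal coloring. -/
theorem lower_bound (k : ℕ) : ∃ χ : ℕ → ℕ, StrongGS (5 ^ k - 1) (Finset.Icc 1 (2 * k)) χ := by
  induction k with
  | zero => exact ⟨fun _ => 0, by simp [StrongGS]⟩
  | succ k ih =>
    obtain ⟨χ, h1, h2, h3, h4⟩ := ih
    simp only [Finset.mem_Icc] at h1 h2 h3 h4
    have hN : 1 ≤ 5 ^ k := Nat.one_le_pow _ _ (by norm_num)
    rw [show 5 ^ (k + 1) = 5 * 5 ^ k by ring]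
    generalize 5 ^ k = N at *
    let ψ : ℕ → ℕ := fun x => if x % 5 = 0 then χ (x / 5) + 2
      else if x % 5 = 1 ∨ x % 5 = 4 then 1 else 2
    have p0 : ∀ x, x % 5 = 0 → ψ x = χ (x / 5) + 2 := fun x hx => by simp [ψ, hx]
    have p1 : ∀ x, (x % 5 = 1 ∨ x % 5 = 4) → ψ x = 1 := fun x hx => by
      have : ¬ x % 5 = 0 := by omega
      simp only [ψ, if_neg this, if_pos hx]
    have p2 : ∀ x, (x % 5 = 2 ∨ x % 5 = 3) → ψ x = 2 := fun x hx => by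
      have a : ¬ x % 5 = 0 := by omega
      have b : ¬ (x % 5 = 1 ∨ x % 5 = 4) := by omega
      simp only [ψ, if_neg a, if_neg b]
    have pc : ∀ x, 1 ≤ x ∧ x ≤ 5 * N - 1 →
        (x % 5 = 0 ∧ ψ x = χ (x / 5) + 2 ∧ 1 ≤ χ (x / 5) ∧ χ (x / 5) ≤ 2 * k) ∨
        ((x % 5 = 1 ∨ x % 5 = 4) ∧ ψ x = 1) ∨ ((x % 5 = 2 ∨ x % 5 = 3) ∧ ψ x = 2) := by
      intro x hx
      by_cases a : x % 5 = 0
      · exact Or.inl ⟨a, p0 x a, h1 (x / 5) (by omega)⟩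
      · by_cases b : x % 5 = 1 ∨ x % 5 = 4
        · exact Or.inr (Or.inl ⟨b, p1 x b⟩)
        · have c : x % 5 = 2 ∨ x % 5 = 3 := by omega
          exact Or.inr (Or.inr ⟨c, p2 x c⟩)
    refine ⟨ψ, ?_, ?_, ?_, ?_⟩ <;> simp only [Finset.mem_Icc]
    · intro x hx
      have := pc x hx
      omega
    · intro i hi
      by_cases i1 : i = 1
      · exact ⟨1, by omega, by rw [p1 1 (by omega), i1]⟩
      by_cases i2 : i = 2
      · exact ⟨2, by omega, by rw [p2 2 (by omega), i2]⟩
      obtain ⟨y, hy, e⟩ := h2 (i - 2) (by omega)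
      refine ⟨5 * y, by omega, ?_⟩
      rw [p0 _ (by omega), show 5 * y / 5 = y by omega, e]; omega
    · intro a ha b hb c hc habc
      have qa := pc a ha
      have qb := pc b hb
      have qc := pc c hc
      by_cases hz : a % 5 = 0 ∧ b % 5 = 0
      · have := h3 (a / 5) (by omega) (b / 5) (by omega) (c / 5) (by omega) (by omega)
        omega
      · omega
    · intro a ha b hb c hc habc
      have qa := pc a ha
      have qb := pc b hb
      have qc := pc c hc
      by_cases hz : a % 5 = 0 ∧ b % 5 = 0
      · have := h4 (a / 5) (by omega) (b / 5) (by omega) (c / 5) (by omega) (by omega)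
        omega
      · omega

/-- For every even positive `r`, there is a strong Gallai–Schur `r`-coloring of
`[1, 5^(r/2) - 1]`, no strong Gallai–Schur `r`-coloring of `[1, m]` exists for
any `m ≥ 5^(r/2)`, and consequently `GS r = 5^(r/2)`. -/
theorem strong_GS_even (r : ℕ) (hr : 0 < r) (hre : Even r) :
    (∃ χ : ℕ → ℕ, StrongGS (5 ^ (r / 2) - 1) (Finset.Icc 1 r) χ) ∧
    (∀ m, 5 ^ (r / 2) ≤ m → ∀ χ : ℕ → ℕ, ¬ StrongGS m (Finset.Icc 1 r) χ) ∧
    GS r = 5 ^ (r / 2) := by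
  obtain ⟨k, rfl⟩ := hre
  rw [show k + k = 2 * k by ring, show 2 * k / 2 = k by omega]
  have lo := lower_bound k
  have up : ∀ m, 5 ^ k ≤ m → ∀ χ : ℕ → ℕ, ¬ StrongGS m (Finset.Icc 1 (2 * k)) χ := by
    rintro m hm χ ⟨h1, -, h3, h4⟩
    simp only [Finset.mem_Icc] at h1 h3 h4
    have hw : WeakGS m (Finset.Icc 1 (2 * k)) χ := by
      refine ⟨fun x hx hxm => Finset.mem_Icc.mpr (h1 x ⟨hx, hxm⟩), fun a b ha hb hab => ?_,
        fun a b ha hb hab => ?_⟩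
      · exact h3 a (by omega) b (by omega) (a + b) (by omega) rfl
      · have := h4 a (by omega) b (by omega) (a + b) (by omega) rfl
        tauto
    have := upper_bound (2 * k) m _ χ (by simp) hw
    rw [FF_even] at this
    omega
  refine ⟨lo, up, le_antisymm (Nat.sInf_le up) (le_csInf ⟨_, up⟩ ?_)⟩
  intro n hn
  by_contra hlt
  obtain ⟨χ, hχ⟩ := lo
  exact hn (5 ^ k - 1) (by omega) χ hχ
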